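/- Let d = 3. For every integer n ≥ 2, the number of generalized linear diagrams of order (n,3) having exactly 2 loops lying in two distinct blocks equals 2 · Σ_{m=0}^{4} Σ_{j=0}^{1} Σ_{s=0}^{min(m, 2−j)} C(m, s) · C(3(n−2)+1−m, 2−j−s) · C(3(n−2)+3−m−j+s, 2−m−j+s) · a(n−2,m). -/

import Mathlib

/-- A generalized linear diagram on points `1,…,N` whose blocks all have size `d`:
a partition of `{1,…,N}` into blocks of size `d`. -/
def IsLinearDiagram (N d : ℕ) (P : Finset (Finset ℕ)) : Prop :=
  (∀ b ∈ P, b.card = d) ∧ (∀ b ∈ P, ∀ x ∈ b, x ∈ Finset.Icc 1 N) ∧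
    ∀ x ∈ Finset.Icc 1 N, ∃! b : Finset ℕ, b ∈ P ∧ x ∈ b

/-- The number of loops of a linear diagram on points `1,…,N`: indices `i` with
`1 ≤ i ≤ N - 1` such that `i` and `i + 1` lie in the same block. -/
noncomputable def linLoops (N : ℕ) (P : Finset (Finset ℕ)) : ℕ :=
  Set.ncard {i : ℕ | 1 ≤ i ∧ i + 1 ≤ N ∧ ∃ b ∈ P, i ∈ b ∧ i + 1 ∈ b}

/-- `numA d n k` : the number of generalized linear diagrams of order `(n,d)`
with exactly `k` loops. -/
noncomputable def numA (d n k : ℕ) : ℕ :=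
  Set.ncard {P : Finset (Finset ℕ) | IsLinearDiagram (n * d) d P ∧ linLoops (n * d) P = k}

/-- `numA` with an integer loop index, zero for negative indices. -/
noncomputable def numAZ (d n : ℕ) (k : ℤ) : ℕ :=
  if 0 ≤ k then numA d n k.toNat else 0

/-- Binomial coefficient with integer arguments: `0` when `y < 0` or `y > x`. -/
def iChoose (x y : ℤ) : ℕ :=
  if 0 ≤ y ∧ y ≤ x then x.toNat.choose y.toNat else 0

/-- A generalized chord diagram on `ZMod N` whose blocks all have size `d`:
a partition of `ZMod N` into blocks of size `d`. -/
def IsChordDiagram (N d : ℕ) (P : Finset (Finset (ZMod N))) : Prop :=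
  (∀ b ∈ P, b.card = d) ∧ ∀ x : ZMod N, ∃! b : Finset (ZMod N), b ∈ P ∧ x ∈ b

/-- A chord diagram is loopless if no residues `i`, `i+1` lie in the same block. -/
def ChordLoopless (N : ℕ) (P : Finset (Finset (ZMod N))) : Prop :=
  ∀ i : ZMod N, ∀ b ∈ P, i ∈ b → i + 1 ∈ b → False

/-- `numB d n` : the number of loopless generalized chord diagrams of order `(n,d)`. -/
noncomputable def numB (d n : ℕ) : ℕ :=
  Set.ncard {P : Finset (Finset (ZMod (n * d))) |
    IsChordDiagram (n * d) d P ∧ ChordLoopless (n * d) P}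

/-- The shift `i ↦ i + v` modulo `M`, on the representatives `1,…,M`. -/
def shiftMod (M v i : ℕ) : ℕ := if i + v ≤ M then i + v else i + v - M

/-- An `m`-symmetric linear diagram with sector size `v` and blocks of size `d`:
a partition of `{1,…,m·v}` into blocks of size `d` invariant under the shift by `v`
modulo `m·v`. -/
def IsMSymLinear (d m v : ℕ) (P : Finset (Finset ℕ)) : Prop :=
  IsLinearDiagram (m * v) d P ∧ ∀ b ∈ P, b.image (shiftMod (m * v) v) ∈ P

/-- The number of loops lying in sector `s` (sectors numbered from `0`):
indices `i` with `s·v + 1 ≤ i ≤ (s+1)·v - 1` such that `i` and `i + 1` lie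
in the same block. -/
noncomputable def sectorLoops (v : ℕ) (P : Finset (Finset ℕ)) (s : ℕ) : ℕ :=
  Set.ncard {i : ℕ | s * v + 1 ≤ i ∧ i + 1 ≤ (s + 1) * v ∧ ∃ b ∈ P, i ∈ b ∧ i + 1 ∈ b}

/-- `numAtil d m v k` : the number of `m`-symmetric linear diagrams with sector size `v`,
blocks of size `d`, and exactly `k` loops in each sector (`ã(v,k;m,d)`). -/
noncomputable def numAtil (d m v k : ℕ) : ℕ :=
  Set.ncard {P : Finset (Finset ℕ) |
    IsMSymLinear d m v P ∧ ∀ s < m, sectorLoops v P s = k}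

section helpers
open Finset

def loopsIn (b : Finset ℕ) : ℕ := (b.filter (fun i => i + 1 ∈ b)).card

def GoodGap (L : Finset ℕ) (M : ℕ) (b1 b2 : Finset ℕ) : Prop :=
  ∀ i < M, i ∉ b1 → i ∉ b2 → i + 1 ∉ b1 → i + 1 ∉ b2 →
    i - ((b1 ∪ b2).filter (· < i)).card ∉ L

/-- conditions on a pair of blocks -/
structure PairOK (L : Finset ℕ) (M c1 c2 l1 l2 : ℕ) (b1 b2 : Finset ℕ) : Prop where
  s1 : b1 ⊆ Icc 1 M
  s2 : b2 ⊆ Icc 1 M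
  dj : Disjoint b1 b2
  k1 : b1.card = c1
  k2 : b2.card = c2
  m1 : loopsIn b1 = l1
  m2 : loopsIn b2 = l2
  gd : ∀ i < M, i ∉ b1 → i ∉ b2 → i + 1 ∉ b1 → i + 1 ∉ b2 →
    i - ((b1 ∪ b2).filter (· < i)).card ∉ L

open Classical in
noncomputable def AA (L : Finset ℕ) (M c1 c2 l1 l2 : ℕ) : Finset (Finset ℕ × Finset ℕ) :=
  ((Icc 1 M).powerset ×ˢ (Icc 1 M).powerset).filter
    (fun b => PairOK L M c1 c2 l1 l2 b.1 b.2)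

noncomputable def A0 (L : Finset ℕ) (M c1 c2 l1 l2 : ℕ) : Finset (Finset ℕ × Finset ℕ) :=
  (AA L M c1 c2 l1 l2).filter (fun b => M ∉ b.1 ∧ M ∉ b.2)
noncomputable def A1 (L : Finset ℕ) (M c1 c2 l1 l2 : ℕ) : Finset (Finset ℕ × Finset ℕ) :=
  (AA L M c1 c2 l1 l2).filter (fun b => M ∈ b.1)
noncomputable def A2 (L : Finset ℕ) (M c1 c2 l1 l2 : ℕ) : Finset (Finset ℕ × Finset ℕ) :=
  (AA L M c1 c2 l1 l2).filter (fun b => M ∈ b.2)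

lemma mem_AA {L : Finset ℕ} {M c1 c2 l1 l2 : ℕ} {b : Finset ℕ × Finset ℕ} :
    b ∈ AA L M c1 c2 l1 l2 ↔ PairOK L M c1 c2 l1 l2 b.1 b.2 := by
  unfold AA
  simp only [mem_filter, mem_product, mem_powerset, and_iff_right_iff_imp]
  exact fun h => ⟨h.s1, h.s2⟩

lemma PairOK.swap {L : Finset ℕ} {M c1 c2 l1 l2 : ℕ} {b1 b2 : Finset ℕ}
    (h : PairOK L M c1 c2 l1 l2 b1 b2) : PairOK L M c2 c1 l2 l1 b2 b1 :=
  ⟨h.s2, h.s1, h.dj.symm, h.k2, h.k1, h.m2, h.m1, fun i hi p q r s => by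
    rw [union_comm]; exact h.gd i hi q p s r⟩

lemma A2_card (L : Finset ℕ) (M c1 c2 l1 l2 : ℕ) :
    (A2 L M c1 c2 l1 l2).card = (A1 L M c2 c1 l2 l1).card := by
  apply Finset.card_nbij' Prod.swap Prod.swap
  · intro b hb
    simp only [A1, A2, coe_filter, Set.mem_ofPred_eq, mem_AA] at hb ⊢
    exact ⟨hb.1.swap, hb.2⟩
  · intro b hb
    simp only [A1, A2, coe_filter, Set.mem_ofPred_eq, mem_AA] at hb ⊢
    exact ⟨hb.1.swap, hb.2⟩
  · intro b _; simp
  · intro b _; simp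

lemma A0_swap (L : Finset ℕ) (M c1 c2 l1 l2 : ℕ) :
    (A0 L M c1 c2 l1 l2).card = (A0 L M c2 c1 l2 l1).card := by
  apply Finset.card_nbij' Prod.swap Prod.swap
  · intro b hb
    simp only [A0, coe_filter, Set.mem_ofPred_eq, mem_AA] at hb ⊢
    exact ⟨hb.1.swap, hb.2.symm⟩
  · intro b hb
    simp only [A0, coe_filter, Set.mem_ofPred_eq, mem_AA] at hb ⊢
    exact ⟨hb.1.swap, hb.2.symm⟩
  · intro b _; simp
  · intro b _; simp

lemma loopsIn_insert {M : ℕ} {b : Finset ℕ} (hb : b ⊆ Icc 1 M) :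
    loopsIn (insert (M + 1) b) = loopsIn b + if M ∈ b then 1 else 0 := by
  have hx : ∀ x ∈ b, x ≤ M := fun x hx => (mem_Icc.1 (hb hx)).2
  unfold loopsIn
  have h2 : M + 1 + 1 ∉ b := fun h => by have := hx _ h; omega
  split_ifs with h
  · have : (insert (M + 1) b).filter (fun i => i + 1 ∈ insert (M + 1) b)
        = insert M (b.filter (fun i => i + 1 ∈ b)) := by
      ext i; simp only [mem_filter, mem_insert]
      constructor
      · rintro ⟨rfl | h3, h4 | h4⟩
        · omega
        · exact absurd h4 h2
        · left; omega
        · right; exact ⟨h3, h4⟩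
      · rintro (rfl | ⟨h3, h4⟩)
        · simp [h]
        · exact ⟨Or.inr h3, Or.inr h4⟩
    rw [this, card_insert_of_notMem]
    intro h5; have := hx _ (mem_filter.1 h5).2; omega
  · congr 1
    ext i; simp only [mem_filter, mem_insert]
    constructor
    · rintro ⟨rfl | h3, h4 | h4⟩
      · omega
      · exact absurd h4 h2
      · have : i = M := by omega
        subst this; exact absurd h3 h
      · exact ⟨h3, h4⟩
    · rintro ⟨h3, h4⟩; exact ⟨Or.inr h3, Or.inr h4⟩

lemma ok_insert {L : Finset ℕ} {M c1 c2 l1 l2 : ℕ} {b1 b2 : Finset ℕ}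
    (h1 : b1 ⊆ Icc 1 M) (h2 : b2 ⊆ Icc 1 M) :
    PairOK L (M + 1) (c1 + 1) c2 (l1 + if M ∈ b1 then 1 else 0) l2 (insert (M + 1) b1) b2 ↔
      PairOK L M c1 c2 l1 l2 b1 b2 := by
  have hx : ∀ x ∈ b1, x ≤ M := fun x hx => (mem_Icc.1 (h1 hx)).2
  have hy : ∀ x ∈ b2, x ≤ M := fun x hx => (mem_Icc.1 (h2 hx)).2
  have n1 : M + 1 ∉ b1 := fun h => by have := hx _ h; omega
  have n2 : M + 1 ∉ b2 := fun h => by have := hy _ h; omega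
  have hI : Icc 1 M ⊆ Icc 1 (M + 1) := Icc_subset_Icc le_rfl (by omega)
  have hf : ∀ i < M, ((insert (M + 1) b1 ∪ b2).filter (· < i)) = ((b1 ∪ b2).filter (· < i)) := by
    intro i hi; ext x; simp only [mem_filter, mem_union, mem_insert]
    constructor
    · rintro ⟨(rfl | h) | h, h'⟩
      · omega
      · exact ⟨Or.inl h, h'⟩
      · exact ⟨Or.inr h, h'⟩
    · rintro ⟨h | h, h'⟩
      · exact ⟨Or.inl (Or.inr h), h'⟩
      · exact ⟨Or.inr h, h'⟩
  constructor
  · intro h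
    refine ⟨h1, h2, ?_, ?_, h.k2, ?_, h.m2, ?_⟩
    · exact h.dj.mono_left (subset_insert _ _)
    · have := h.k1; rw [card_insert_of_notMem n1] at this; omega
    · have := h.m1; rw [loopsIn_insert h1] at this; omega
    · intro i hi a b c d
      rw [← hf i hi]
      apply h.gd i (by omega) _ b _ d
      · simp only [mem_insert, not_or]; exact ⟨by omega, a⟩
      · simp only [mem_insert, not_or]; exact ⟨by omega, c⟩
  · intro h
    refine ⟨?_, h2.trans hI, ?_, ?_, h.k2, ?_, h.m2, ?_⟩
    · intro x hx'; rcases mem_insert.1 hx' with rfl | h'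
      · simp
      · exact hI (h1 h')
    · rw [disjoint_insert_left]; exact ⟨n2, h.dj⟩
    · rw [card_insert_of_notMem n1, h.k1]
    · rw [loopsIn_insert h1, h.m1]
    · intro i hi a b c d
      simp only [mem_insert, not_or] at a c
      have hi' : i < M := by omega
      rw [hf i hi']
      exact h.gd i hi' a.2 b c.2 d

lemma ok_same {L : Finset ℕ} {M c1 c2 l1 l2 : ℕ} {b1 b2 : Finset ℕ}
    (h1 : M + 1 ∉ b1) (h2 : M + 1 ∉ b2) :
    PairOK L (M + 1) c1 c2 l1 l2 b1 b2 ↔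
      PairOK L M c1 c2 l1 l2 b1 b2 ∧ (M ∉ b1 → M ∉ b2 → M - (c1 + c2) ∉ L) := by
  have hI : Icc 1 M ⊆ Icc 1 (M + 1) := Icc_subset_Icc le_rfl (by omega)
  have hJ : ∀ b : Finset ℕ, M + 1 ∉ b → b ⊆ Icc 1 (M + 1) → b ⊆ Icc 1 M := by
    intro b hb hs x hx
    have := mem_Icc.1 (hs hx)
    have : x ≠ M + 1 := by rintro rfl; exact hb hx
    rw [mem_Icc]; omega
  have hK : b1 ⊆ Icc 1 M → b2 ⊆ Icc 1 M → Disjoint b1 b2 → b1.card = c1 → b2.card = c2 →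
      M ∉ b1 → M ∉ b2 → ((b1 ∪ b2).filter (· < M)).card = c1 + c2 := by
    intro a b c d e f g
    rw [filter_true_of_mem, card_union_of_disjoint c, d, e]
    intro x hx
    rcases mem_union.1 hx with h | h
    · have := (mem_Icc.1 (a h)).2
      have : x ≠ M := by rintro rfl; exact f h
      omega
    · have := (mem_Icc.1 (b h)).2
      have : x ≠ M := by rintro rfl; exact g h
      omega
  constructor
  · intro h
    have t1 := hJ _ h1 h.s1
    have t2 := hJ _ h2 h.s2
    refine ⟨⟨t1, t2, h.dj, h.k1, h.k2, h.m1, h.m2, fun i hi => h.gd i (by omega)⟩, ?_⟩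
    intro a b
    rw [← hK t1 t2 h.dj h.k1 h.k2 a b]
    exact h.gd M (by omega) a b h1 h2
  · rintro ⟨h, h'⟩
    refine ⟨h.s1.trans hI, h.s2.trans hI, h.dj, h.k1, h.k2, h.m1, h.m2, ?_⟩
    intro i hi a b c d
    rcases Nat.lt_succ_iff_lt_or_eq.1 hi with h3 | rfl
    · exact h.gd i h3 a b c d
    · rw [hK h.s1 h.s2 h.dj h.k1 h.k2 a b]; exact h' a b

lemma A0_succ (L : Finset ℕ) (M c1 c2 l1 l2 : ℕ) :
    (A0 L (M + 1) c1 c2 l1 l2).card =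
      (A1 L M c1 c2 l1 l2).card + (A2 L M c1 c2 l1 l2).card +
        (if M - (c1 + c2) ∈ L then 0 else (A0 L M c1 c2 l1 l2).card) := by
  classical
  have hd : Disjoint (A1 L M c1 c2 l1 l2) (A2 L M c1 c2 l1 l2) := by
    rw [disjoint_left]; intro b h1 h2
    simp only [A1, A2, mem_filter, mem_AA] at h1 h2
    exact (disjoint_left.1 h1.1.dj) h1.2 h2.2
  have hd2 : Disjoint (A1 L M c1 c2 l1 l2 ∪ A2 L M c1 c2 l1 l2)
      (if M - (c1 + c2) ∈ L then ∅ else A0 L M c1 c2 l1 l2) := by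
    split_ifs
    · simp
    · rw [disjoint_left]; intro b h1 h2
      simp only [A0, A1, A2, mem_union, mem_filter, mem_AA] at h1 h2
      tauto
  have : A0 L (M + 1) c1 c2 l1 l2 = A1 L M c1 c2 l1 l2 ∪ A2 L M c1 c2 l1 l2 ∪
      (if M - (c1 + c2) ∈ L then ∅ else A0 L M c1 c2 l1 l2) := by
    ext b
    have key : b ∈ A0 L (M + 1) c1 c2 l1 l2 ↔ PairOK L M c1 c2 l1 l2 b.1 b.2 ∧
        (M ∉ b.1 → M ∉ b.2 → M - (c1 + c2) ∉ L) := by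
      simp only [A0, mem_filter, mem_AA]
      constructor
      · rintro ⟨h, h1, h2⟩; exact (ok_same h1 h2).1 h
      · intro h
        have e1 : M + 1 ∉ b.1 := fun h' => by have := mem_Icc.1 (h.1.s1 h'); omega
        have e2 : M + 1 ∉ b.2 := fun h' => by have := mem_Icc.1 (h.1.s2 h'); omega
        exact ⟨(ok_same e1 e2).2 h, e1, e2⟩
    rw [key]
    split_ifs with hL
    · simp only [A1, A2, mem_union, mem_filter, mem_AA, notMem_empty, hL]
      by_cases x1 : M ∈ b.1 <;> by_cases x2 : M ∈ b.2 <;> simp [x1, x2]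
    · simp only [A0, A1, A2, mem_union, mem_filter, mem_AA, hL]
      by_cases x1 : M ∈ b.1 <;> by_cases x2 : M ∈ b.2 <;> simp [x1, x2]
  rw [this, card_union_of_disjoint hd2, card_union_of_disjoint hd]
  split_ifs <;> simp

lemma A1_zero (L : Finset ℕ) (M c2 l1 l2 : ℕ) : (A1 L M 0 c2 l1 l2).card = 0 := by
  rw [card_eq_zero, eq_empty_iff_forall_notMem]
  intro b hb
  simp only [A1, mem_filter, mem_AA] at hb
  have := card_eq_zero.1 hb.1.k1
  rw [this] at hb; simp at hb

lemma A1_succ (L : Finset ℕ) (M c1 c2 l1 l2 : ℕ) :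
    (A1 L (M + 1) (c1 + 1) c2 l1 l2).card =
      (A0 L M c1 c2 l1 l2).card + (A2 L M c1 c2 l1 l2).card +
        (if l1 = 0 then 0 else (A1 L M c1 c2 (l1 - 1) l2).card) := by
  classical
  have hd : Disjoint (A0 L M c1 c2 l1 l2) (A2 L M c1 c2 l1 l2) := by
    rw [disjoint_left]; intro b h1 h2
    simp only [A0, A2, mem_filter, mem_AA] at h1 h2
    tauto
  have hd2 : Disjoint (A0 L M c1 c2 l1 l2 ∪ A2 L M c1 c2 l1 l2)
      (if l1 = 0 then ∅ else A1 L M c1 c2 (l1 - 1) l2) := by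
    split_ifs
    · simp
    · rw [disjoint_left]; intro b h1 h2
      simp only [A0, A1, A2, mem_union, mem_filter, mem_AA] at h1 h2
      have := disjoint_left.1 h2.1.dj h2.2
      tauto
  have hm : ∀ b : Finset ℕ × Finset ℕ, b ∈ A0 L M c1 c2 l1 l2 ∪ A2 L M c1 c2 l1 l2 ∪
      (if l1 = 0 then ∅ else A1 L M c1 c2 (l1 - 1) l2) ↔
      (∃ l, PairOK L M c1 c2 l l2 b.1 b.2 ∧ l1 = l + if M ∈ b.1 then 1 else 0) := by
    intro b
    by_cases h : M ∈ b.1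
    · simp only [h, if_true]
      split_ifs with h0
      · simp only [A0, A2, mem_union, mem_filter, mem_AA, h, notMem_empty]
        constructor
        · rintro ((h1 | h1) | h1)
          · tauto
          · exact absurd h1.2 (disjoint_left.1 h1.1.dj h)
          · tauto
        · rintro ⟨l, _, h2⟩; omega
      · simp only [A0, A1, A2, mem_union, mem_filter, mem_AA, h]
        constructor
        · rintro ((h1 | h1) | h1)
          · tauto
          · exact absurd h1.2 (disjoint_left.1 h1.1.dj h)
          · exact ⟨l1 - 1, h1.1, by omega⟩
        · rintro ⟨l, h1, rfl⟩; exact Or.inr ⟨h1, trivial⟩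
    · have : (b ∈ (if l1 = 0 then ∅ else A1 L M c1 c2 (l1 - 1) l2)) ↔ False := by
        split_ifs
        · simp
        · simp [A1, h]
      simp only [mem_union, this, A0, A2, mem_filter, mem_AA, h, if_false]
      constructor
      · intro h1; exact ⟨l1, by tauto, rfl⟩
      · rintro ⟨l, h1, rfl⟩
        tauto
  have : (A1 L (M + 1) (c1 + 1) c2 l1 l2).card = (A0 L M c1 c2 l1 l2 ∪ A2 L M c1 c2 l1 l2 ∪
      (if l1 = 0 then ∅ else A1 L M c1 c2 (l1 - 1) l2)).card := by
    apply Finset.card_nbij' (fun b => (b.1.erase (M + 1), b.2)) (fun b => (insert (M + 1) b.1, b.2))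
    · intro b hb
      simp only [A1, coe_filter, Set.mem_ofPred_eq, mem_AA] at hb
      rw [mem_coe, hm]
      have e1 : b.1.erase (M + 1) ⊆ Icc 1 M := by
        intro x hx
        have := mem_Icc.1 (hb.1.s1 (mem_of_mem_erase hx))
        have := ne_of_mem_erase hx
        rw [mem_Icc]; omega
      have e2 : b.2 ⊆ Icc 1 M := by
        intro x hx
        have := mem_Icc.1 (hb.1.s2 hx)
        have : x ≠ M + 1 := by rintro rfl; exact disjoint_left.1 hb.1.dj hb.2 hx
        rw [mem_Icc]; omega
      have e3 := hb.1.m1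
      have e4 := loopsIn_insert e1
      rw [insert_erase hb.2] at e4
      refine ⟨loopsIn (b.1.erase (M + 1)), ?_, by rw [← e3, e4]⟩
      rw [← ok_insert e1 e2, insert_erase hb.2, ← e4, e3]
      exact hb.1
    · intro b hb
      rw [mem_coe, hm] at hb
      obtain ⟨l, h1, rfl⟩ := hb
      simp only [A1, coe_filter, Set.mem_ofPred_eq, mem_AA]
      exact ⟨(ok_insert h1.s1 h1.s2).2 h1, mem_insert_self _ _⟩
    · intro b hb
      simp only [A1, coe_filter, Set.mem_ofPred_eq, mem_AA] at hb
      simp only [insert_erase hb.2]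
    · intro b hb
      rw [mem_coe, hm] at hb
      obtain ⟨l, h1, rfl⟩ := hb
      have : M + 1 ∉ b.1 := fun h => by have := mem_Icc.1 (h1.s1 h); omega
      simp only [erase_insert this]
  rw [this, card_union_of_disjoint hd2, card_union_of_disjoint hd]
  split_ifs <;> simp

lemma A1_M0 (L : Finset ℕ) (c1 c2 l1 l2 : ℕ) : (A1 L 0 c1 c2 l1 l2).card = 0 := by
  rw [card_eq_zero, eq_empty_iff_forall_notMem]
  intro b hb
  simp only [A1, mem_filter, mem_AA] at hb
  have := mem_Icc.1 (hb.1.s1 hb.2)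
  omega

lemma A0_M0 (L : Finset ℕ) (c1 c2 l1 l2 : ℕ) : (A0 L 0 c1 c2 l1 l2).card =
    if c1 = 0 ∧ c2 = 0 ∧ l1 = 0 ∧ l2 = 0 then 1 else 0 := by
  split_ifs with h
  · obtain ⟨rfl, rfl, rfl, rfl⟩ := h
    rw [card_eq_one]
    refine ⟨(∅, ∅), ?_⟩
    ext b
    simp only [A0, mem_filter, mem_AA, mem_singleton]
    constructor
    · rintro ⟨h, _⟩
      exact Prod.ext (card_eq_zero.1 h.k1) (card_eq_zero.1 h.k2)
    · rintro rfl
      refine ⟨⟨by simp, by simp, by simp, rfl, rfl, rfl, rfl, by simp⟩, by simp⟩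
  · rw [card_eq_zero, eq_empty_iff_forall_notMem]
    intro b hb
    simp only [A0, mem_filter, mem_AA] at hb
    have h1 : b.1 = ∅ := by simpa using hb.1.s1
    have h2 : b.2 = ∅ := by simpa using hb.1.s2
    have e1 := hb.1.k1
    have e2 := hb.1.k2
    have e3 := hb.1.m1
    have e4 := hb.1.m2
    rw [h1] at e1 e3
    rw [h2] at e2 e4
    simp [loopsIn] at e1 e2 e3 e4
    omega

/-- state recursion for words all whose gaps are nonempty -/
def gg : ℕ → Bool → ℕ → ℕ → ℕ → ℕ → ℕ
  | 0, false, c1, c2, l1, l2 => if c1 = 0 ∧ c2 = 0 ∧ l1 = 0 ∧ l2 = 0 then 1 else 0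
  | 0, true, _, _, _, _ => 0
  | M + 1, false, c1, c2, l1, l2 => gg M true c1 c2 l1 l2 + gg M true c2 c1 l2 l1
  | _ + 1, true, 0, _, _, _ => 0
  | M + 1, true, c1 + 1, c2, l1, l2 => gg M false c1 c2 l1 l2 + gg M true c2 c1 l2 l1 +
      (if l1 = 0 then 0 else gg M true c1 c2 (l1 - 1) l2)

lemma gg_zero (M : ℕ) : ∀ c1 c2 l1 l2 : ℕ,
    (2 * (c1 + c2) < M + l1 + l2 → gg M false c1 c2 l1 l2 = 0) ∧
    (2 * (c1 + c2) < M + l1 + l2 + 1 → gg M true c1 c2 l1 l2 = 0) := by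
  induction M with
  | zero =>
    intro c1 c2 l1 l2
    simp only [gg]
    refine ⟨fun h => if_neg (by omega), fun _ => trivial⟩
  | succ M ih =>
    intro c1 c2 l1 l2
    constructor
    · intro h
      simp only [gg]
      rw [(ih c1 c2 l1 l2).2 (by omega), (ih c2 c1 l2 l1).2 (by omega)]
    · intro h
      cases c1 with
      | zero => simp [gg]
      | succ c1 =>
        simp only [gg]
        rw [(ih c1 c2 l1 l2).1 (by omega), (ih c2 c1 l2 l1).2 (by omega)]
        split_ifs with h0
        · rfl
        · rw [(ih c1 c2 (l1 - 1) l2).2 (by omega)]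

lemma gg_zero2 (M : ℕ) : ∀ (x : Bool) (c1 c2 l1 l2 : ℕ), M < c1 + c2 →
    gg M x c1 c2 l1 l2 = 0 := by
  induction M with
  | zero =>
    intro x c1 c2 l1 l2 h
    cases x
    · simp only [gg]; exact if_neg (by omega)
    · simp only [gg]
  | succ M ih =>
    intro x c1 c2 l1 l2 h
    cases x
    · simp only [gg]
      rw [ih _ _ _ _ _ (by omega), ih _ _ _ _ _ (by omega)]
    · cases c1 with
      | zero => simp [gg]
      | succ c1 =>
        simp only [gg]
        rw [ih _ _ _ _ _ (by omega), ih _ _ _ _ _ (by omega), ih _ _ _ _ _ (by omega)]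
        simp

lemma gg_false_swap (M c1 c2 l1 l2 : ℕ) : gg M false c1 c2 l1 l2 = gg M false c2 c1 l2 l1 := by
  cases M with
  | zero => simp only [gg]; congr 1; apply propext; tauto
  | succ M => simp only [gg]; rw [add_comm]

noncomputable def mm (L : Finset ℕ) (t : ℕ) : ℕ := (L.filter (· < t)).card

lemma mm_le (L : Finset ℕ) (t : ℕ) : mm L t ≤ t := by
  unfold mm
  calc _ ≤ (range t).card := card_le_card (by intro x hx; simp at hx ⊢; exact hx.2)
    _ = t := card_range t

lemma mm_succ (L : Finset ℕ) (t : ℕ) : mm L (t + 1) = mm L t + if t ∈ L then 1 else 0 := by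
  unfold mm
  split_ifs with h
  · rw [← card_insert_of_notMem (a := t) (by simp)]
    congr 1; ext x; simp only [mem_filter, mem_insert]
    constructor
    · rintro ⟨a, b⟩
      rcases Nat.lt_succ_iff_lt_or_eq.1 b with h | h
      · exact Or.inr ⟨a, h⟩
      · exact Or.inl h
    · rintro (rfl | ⟨a, b⟩)
      · exact ⟨h, by omega⟩
      · exact ⟨a, by omega⟩
  · rw [add_zero]; congr 1; ext x; simp only [mem_filter]
    constructor
    · rintro ⟨a, b⟩
      rcases Nat.lt_succ_iff_lt_or_eq.1 b with h' | rfl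
      · exact ⟨a, h'⟩
      · exact absurd a h
    · rintro ⟨a, b⟩
      exact ⟨a, by omega⟩

noncomputable def SS (L : Finset ℕ) (t : ℕ) (x : Bool) (c1 c2 l1 l2 : ℕ) : ℕ :=
  ∑ k ∈ range (t - mm L t + 1), (t - mm L t).choose k * gg (mm L t + k + c1 + c2) x c1 c2 l1 l2

lemma A_closed (L : Finset ℕ) (M : ℕ) : ∀ t c1 c2 l1 l2 : ℕ, M = t + c1 + c2 →
    (A0 L M c1 c2 l1 l2).card = SS L t false c1 c2 l1 l2 ∧
    (A1 L M c1 c2 l1 l2).card = SS L t true c1 c2 l1 l2 := by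
  induction M with
  | zero =>
    intro t c1 c2 l1 l2 h
    obtain ⟨rfl, rfl, rfl⟩ : t = 0 ∧ c1 = 0 ∧ c2 = 0 := by omega
    have : mm L 0 = 0 := by simp [mm]
    rw [A0_M0, A1_M0]
    simp [SS, this, gg]
  | succ M ih =>
    intro t c1 c2 l1 l2 h
    constructor
    · cases t with
      | zero =>
        have z : mm L 0 = 0 := by simp [mm]
        have : SS L 0 false c1 c2 l1 l2 = 0 := by
          simp only [SS, z, Nat.sub_zero, zero_add, range_one, sum_singleton, Nat.choose_self,
            one_mul]
          rw [show c1 + c2 = M + 1 by omega]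
          simp only [gg]
          rw [gg_zero2 _ _ _ _ _ _ (by omega), gg_zero2 _ _ _ _ _ _ (by omega)]
        rw [this, card_eq_zero, eq_empty_iff_forall_notMem]
        intro b hb
        simp only [A0, mem_filter, mem_AA] at hb
        have h1 := (ok_same hb.2.1 hb.2.2).1 hb.1
        have h2 := card_le_card (union_subset h1.1.s1 h1.1.s2)
        rw [card_union_of_disjoint h1.1.dj, h1.1.k1, h1.1.k2, Nat.card_Icc] at h2
        omega
      | succ t =>
        rw [A0_succ, A2_card]
        have hM : M = t + c1 + c2 := by omega
        rw [(ih t c1 c2 l1 l2 hM).1, (ih t c1 c2 l1 l2 hM).2, (ih t c2 c1 l2 l1 (by omega)).2]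
        have e : M - (c1 + c2) = t := by omega
        rw [e]
        have hle := mm_le L t
        unfold SS
        rw [mm_succ]
        have key : ∑ k ∈ range (t - mm L t + 1), (t - mm L t).choose k *
              gg (mm L t + k + c1 + c2) true c1 c2 l1 l2 +
            ∑ k ∈ range (t - mm L t + 1), (t - mm L t).choose k *
              gg (mm L t + k + c2 + c1) true c2 c1 l2 l1 =
            ∑ k ∈ range (t - mm L t + 1), (t - mm L t).choose k *
              gg (mm L t + (k + 1) + c1 + c2) false c1 c2 l1 l2 := by
          rw [← sum_add_distrib]
          apply sum_congr rfl
          intro k _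
          rw [show mm L t + (k + 1) + c1 + c2 = (mm L t + k + c1 + c2) + 1 by omega,
            show mm L t + k + c2 + c1 = (mm L t + k + c1 + c2) by omega]
          simp only [gg]
          ring
        rw [key]
        split_ifs with hL
        · rw [show t + 1 - (mm L t + 1) = t - mm L t by omega, add_zero]
          apply sum_congr rfl
          intro k _
          rw [show mm L t + (k + 1) = mm L t + 1 + k by omega]
        · rw [add_zero, show t + 1 - mm L t = (t - mm L t) + 1 by omega]
          have := Finset.sum_choose_succ_mul (R := ℕ)
            (fun i _ => gg (mm L t + i + c1 + c2) false c1 c2 l1 l2) (t - mm L t)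
          simp only [Nat.cast_id] at this
          rw [show t - mm L t + 1 + 1 = t - mm L t + 2 by omega, this, add_comm]
    · cases c1 with
      | zero =>
        rw [A1_zero]
        unfold SS
        symm
        apply sum_eq_zero
        intro k _
        cases (mm L t + k + 0 + c2) <;> simp [gg]
      | succ c1 =>
        have hM : M = t + c1 + c2 := by omega
        rw [A1_succ, A2_card, (ih t c1 c2 l1 l2 hM).1, (ih t c2 c1 l2 l1 (by omega)).2,
          (ih t c1 c2 (l1 - 1) l2 hM).2]
        unfold SS
        have : (if l1 = 0 then 0 else ∑ k ∈ range (t - mm L t + 1), (t - mm L t).choose k *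
              gg (mm L t + k + c1 + c2) true c1 c2 (l1 - 1) l2) =
            ∑ k ∈ range (t - mm L t + 1), (t - mm L t).choose k * (if l1 = 0 then 0 else
              gg (mm L t + k + c1 + c2) true c1 c2 (l1 - 1) l2) := by
          split_ifs <;> simp
        rw [this, ← sum_add_distrib, ← sum_add_distrib]
        apply sum_congr rfl
        intro k _
        rw [show mm L t + k + (c1 + 1) + c2 = (mm L t + k + c1 + c2) + 1 by omega,
            show mm L t + k + c2 + c1 = (mm L t + k + c1 + c2) by omega]
        simp only [gg]
        ring

lemma gg_vals : gg 6 false 3 3 1 1 = 0 ∧ gg 7 false 3 3 1 1 = 8 ∧ gg 8 false 3 3 1 1 = 32 ∧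
    gg 9 false 3 3 1 1 = 48 ∧ gg 10 false 3 3 1 1 = 24 := by
  decide +kernel

lemma SS_val (L : Finset ℕ) (t m p : ℕ) (hm : mm L t = m) (hp : t = p + m) :
    SS L t false 3 3 1 1 =
      ∑ k ∈ range 5, p.choose k * gg (m + k + 6) false 3 3 1 1 := by
  unfold SS
  rw [hm, hp, Nat.add_sub_cancel]
  have h1 : ∑ k ∈ range (p + 1), p.choose k * gg (m + k + 3 + 3) false 3 3 1 1 =
      ∑ k ∈ range (p + 1 + 5), p.choose k * gg (m + k + 6) false 3 3 1 1 := by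
    apply sum_subset
    · intro x; simp only [mem_range]; omega
    · intro x _ hx
      simp only [mem_range, not_lt] at hx
      rw [Nat.choose_eq_zero_of_lt (by omega), zero_mul]
  rw [h1]
  symm
  apply sum_subset
  · intro x; simp only [mem_range]; omega
  · intro x _ hx
    simp only [mem_range, not_lt] at hx
    rw [(gg_zero (m + x + 6) 3 3 1 1).1 (by omega), mul_zero]

def RHS (N m : ℕ) : ℕ := ∑ j ∈ Finset.range 2,
            ∑ s ∈ Finset.range (min m (2 - j) + 1),
              m.choose s *
                iChoose ((N : ℤ) + 1 - (m : ℤ)) (2 - (j : ℤ) - (s : ℤ)) *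
                iChoose ((N : ℤ) + 3 - (m : ℤ) - (j : ℤ) + (s : ℤ))
                  (2 - (m : ℤ) - (j : ℤ) + (s : ℤ))

lemma iChoose_nat (x y : ℤ) (a b : ℕ) (hx : x = a) (hy : y = b) :
    iChoose x y = a.choose b := by
  subst hx hy
  unfold iChoose
  split_ifs with h
  · simp
  · rw [Nat.choose_eq_zero_of_lt (by omega)]

lemma iChoose_neg (x y : ℤ) (hy : y < 0) : iChoose x y = 0 := by
  unfold iChoose
  rw [if_neg (by omega)]

lemma ch3 (p : ℕ) : (p.choose 3 : ℤ) * 6 = p * (p - 1) * (p - 2) := by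
  induction p with
  | zero => simp
  | succ p ih =>
    have h2 : (p.choose 2 : ℤ) * 2 = p * (p - 1) := by
      clear ih
      induction p with
      | zero => simp
      | succ p ih => rw [Nat.choose_succ_succ' p 1]; push_cast; simp; linarith
    rw [Nat.choose_succ_succ' p 2]; push_cast; linarith

lemma ch2 (p : ℕ) : (p.choose 2 : ℤ) * 2 = p * (p - 1) := by
  induction p with
  | zero => simp
  | succ p ih => rw [Nat.choose_succ_succ' p 1]; push_cast; simp; linarith

lemma ch4 (p : ℕ) : (p.choose 4 : ℤ) * 24 = p * (p - 1) * (p - 2) * (p - 3) := by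
  induction p with
  | zero => simp
  | succ p ih =>
    have h3 := ch3 p
    rw [Nat.choose_succ_succ' p 3]; push_cast; linarith

lemma RHS_nat (N m p : ℕ) (h : N + 1 = p + m) :
    RHS N m = ∑ j ∈ Finset.range 2, ∑ s ∈ Finset.range (min m (2 - j) + 1),
      if m + j ≤ 2 + s then
        m.choose s * p.choose (2 - j - s) * (p + (2 + s - j)).choose (2 + s - m - j) else 0 := by
  unfold RHS
  apply sum_congr rfl
  intro j hj
  apply sum_congr rfl
  intro s hs
  simp only [mem_range] at hj hs
  have hs2 : s ≤ 2 - j := by omega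
  rw [iChoose_nat _ _ p (2 - j - s) (by omega) (by omega)]
  split_ifs with h'
  · rw [iChoose_nat _ _ (p + (2 + s - j)) (2 + s - m - j) (by omega) (by omega)]
  · rw [iChoose_neg _ _ (by omega), mul_zero]

lemma arith (N m p : ℕ) (h : N + 1 = p + m) :
    ∑ k ∈ range 5, p.choose k * gg (m + k + 6) false 3 3 1 1 =
      if m < 5 then 4 * RHS N m else 0 := by
  obtain ⟨v0, v1, v2, v3, v4⟩ := gg_vals
  have vz : ∀ r, 11 ≤ r → gg r false 3 3 1 1 = 0 := fun r hr =>
    (gg_zero r 3 3 1 1).1 (by omega)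
  have q2 := ch2 p
  have q3 := ch3 p
  have q4 := ch4 p
  have r2 := ch2 (p + 2)
  have s2 := ch2 (p + 3)
  have t2 := ch2 (p + 4)
  push_cast at r2 s2 t2
  split_ifs with hm
  · rw [RHS_nat N m p h]
    have w1 := vz 11 (by norm_num)
    have w2 := vz 12 (by norm_num)
    have w3 := vz 13 (by norm_num)
    have w4 := vz 14 (by norm_num)
    interval_cases m
    all_goals simp [sum_range_succ, v0, v1, v2, v3, v4, w1, w2, w3, w4]
    all_goals zify
    · linear_combination 16 * q2 + 8 * q3 + q4 - 2 * ((p + 2).choose 2 : ℤ) * q2 - p * (p - 1) * r2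
    · linear_combination 24 * q2 + 4 * q3 - 2 * (p + 2) * q2 - 2 * p * s2
    · linear_combination 10 * q2 - 2 * t2
    · ring
    · decide
  · apply sum_eq_zero
    intro k _
    rw [vz _ (by omega), mul_zero]

def PairIn (P : Finset (Finset ℕ)) (b : Finset ℕ × Finset ℕ) : Prop :=
  b.1 ∈ P ∧ b.2 ∈ P ∧ ∀ c ∈ P, c ≠ b.1 → c ≠ b.2 → loopsIn c = 0

lemma exu {N : ℕ} {P : Finset (Finset ℕ)} (h : IsLinearDiagram N 3 P) {b c : Finset ℕ} {x : ℕ}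
    (hb : b ∈ P) (hc : c ∈ P) (xb : x ∈ b) (xc : x ∈ c) : b = c :=
  (h.2.2 x (h.2.1 b hb x xb)).unique ⟨hb, xb⟩ ⟨hc, xc⟩

open Classical in
noncomputable def DD (N : ℕ) : Finset (Finset (Finset ℕ)) :=
  (Icc 1 N).powerset.powerset.filter (fun P => IsLinearDiagram N 3 P)

lemma mem_DD {N : ℕ} {P : Finset (Finset ℕ)} : P ∈ DD N ↔ IsLinearDiagram N 3 P := by
  unfold DD
  simp only [mem_filter, mem_powerset, and_iff_right_iff_imp]
  intro h b hb
  rw [mem_powerset]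
  exact fun x hx => h.2.1 b hb x hx

def loopF (P : Finset (Finset ℕ)) : Finset ℕ :=
  P.biUnion (fun b => b.filter (fun i => i + 1 ∈ b))

lemma mem_loopF {P : Finset (Finset ℕ)} {i : ℕ} :
    i ∈ loopF P ↔ ∃ b ∈ P, i ∈ b ∧ i + 1 ∈ b := by
  simp [loopF]

lemma loopF_set {N : ℕ} {P : Finset (Finset ℕ)} (h : IsLinearDiagram N 3 P) :
    {i : ℕ | 1 ≤ i ∧ i + 1 ≤ N ∧ ∃ b ∈ P, i ∈ b ∧ i + 1 ∈ b} = (loopF P : Set ℕ) := by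
  ext i
  rw [mem_coe, mem_loopF]
  simp only [Set.mem_ofPred_eq]
  constructor
  · exact fun h => h.2.2
  · rintro ⟨b, hb, h1, h2⟩
    have e1 := mem_Icc.1 (h.2.1 b hb _ h1)
    have e2 := mem_Icc.1 (h.2.1 b hb _ h2)
    exact ⟨e1.1, e2.2, b, hb, h1, h2⟩

lemma linLoops_eq {N : ℕ} {P : Finset (Finset ℕ)} (h : IsLinearDiagram N 3 P) :
    linLoops N P = (loopF P).card := by
  unfold linLoops
  rw [loopF_set h, Set.ncard_coe_finset]

lemma linLoops_sum {N : ℕ} {P : Finset (Finset ℕ)} (h : IsLinearDiagram N 3 P) :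
    linLoops N P = ∑ b ∈ P, loopsIn b := by
  rw [linLoops_eq h]
  unfold loopF
  rw [card_biUnion]
  · rfl
  · intro b hb c hc hbc
    change Disjoint (b.filter (fun i => i + 1 ∈ b)) (c.filter (fun i => i + 1 ∈ c))
    rw [disjoint_left]
    intro x hx hy
    exact hbc (exu h hb hc (mem_filter.1 hx).1 (mem_filter.1 hy).1)

lemma count_notin (S : Finset ℕ) (i : ℕ) :
    Nat.count (fun x => x ∉ S) i = i - (S.filter (· < i)).card := by
  rw [Nat.count_eq_card_filter_range]
  have h := card_filter_add_card_filter_not (s := range i) (fun x => x ∉ S)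
  have h2 : ((range i).filter (fun x => ¬ x ∉ S)) = S.filter (· < i) := by
    ext x; simp only [mem_filter, mem_range, not_not]; tauto
  rw [h2, card_range] at h
  omega

section fiber
variable {N : ℕ} {b1 b2 : Finset ℕ}

/-- increasing enumeration of the complement -/
noncomputable def ph (S : Finset ℕ) (g : ℕ) : ℕ := Nat.nth (fun x => x ∉ S) g
noncomputable def ps (S : Finset ℕ) (g : ℕ) : ℕ := Nat.count (fun x => x ∉ S) g

lemma inf_compl (S : Finset ℕ) : (Set.ofPred (fun x => x ∉ S)).Infinite := by
  have := S.finite_toSet.infinite_compl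
  exact this

lemma ph_notin (S : Finset ℕ) (g : ℕ) : ph S g ∉ S :=
  Nat.nth_mem_of_infinite (inf_compl S) g
lemma ps_ph (S : Finset ℕ) (g : ℕ) : ps S (ph S g) = g :=
  Nat.count_nth_of_infinite (inf_compl S) g
lemma ph_ps (S : Finset ℕ) {x : ℕ} (hx : x ∉ S) : ph S (ps S x) = x :=
  Nat.nth_count (p := fun x => x ∉ S) hx
lemma ph_mono (S : Finset ℕ) : StrictMono (ph S) := Nat.nth_strictMono (inf_compl S)
lemma ps_succ (S : Finset ℕ) {x : ℕ} (hx : x ∉ S) : ps S (x + 1) = ps S x + 1 := by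
  unfold ps; rw [Nat.count_succ, if_pos hx]

lemma ph_zero {S : Finset ℕ} (h : S ⊆ Icc 1 (N + 6)) : ph S 0 = 0 := by
  have h0 : 0 ∉ S := fun h' => by have := mem_Icc.1 (h h'); omega
  have := ph_ps S h0
  simpa [ps] using this

lemma ph_top {S : Finset ℕ} (h : S ⊆ Icc 1 (N + 6)) (hc : S.card = 6) :
    ph S (N + 1) = N + 7 := by
  have h0 : N + 7 ∉ S := fun h' => by have := mem_Icc.1 (h h'); omega
  have := ph_ps S h0
  have e : ps S (N + 7) = N + 1 := by
    unfold ps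
    rw [count_notin, filter_true_of_mem, hc]
    · omega
    · intro x hx; have := mem_Icc.1 (h hx); omega
  rwa [e] at this

lemma ph_mem {S : Finset ℕ} (h : S ⊆ Icc 1 (N + 6)) (hc : S.card = 6) (g : ℕ) :
    ph S g ∈ Icc 1 (N + 6) ↔ g ∈ Icc 1 N := by
  have e1 := (ph_mono S).lt_iff_lt (a := 0) (b := g)
  have e2 := (ph_mono S).lt_iff_lt (a := g) (b := N + 1)
  rw [ph_zero h] at e1
  rw [ph_top h hc] at e2
  simp only [mem_Icc]
  omega

noncomputable def up (b1 b2 : Finset ℕ) (Q : Finset (Finset ℕ)) : Finset (Finset ℕ) :=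
  {b1, b2} ∪ Q.image (fun q => q.image (ph (b1 ∪ b2)))
noncomputable def dn (b1 b2 : Finset ℕ) (P : Finset (Finset ℕ)) : Finset (Finset ℕ) :=
  (P \ {b1, b2}).image (fun q => q.image (ps (b1 ∪ b2)))

lemma img_ps_ph (S q : Finset ℕ) : (q.image (ph S)).image (ps S) = q := by
  rw [image_image]
  have : ps S ∘ ph S = id := by funext x; exact ps_ph S x
  rw [this, image_id]

lemma img_ph_ps (S q : Finset ℕ) (h : Disjoint q S) : (q.image (ps S)).image (ph S) = q := by
  rw [image_image]
  have : ∀ x ∈ q, (ph S ∘ ps S) x = id x := by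
    intro x hx; exact ph_ps S (disjoint_left.1 h hx)
  rw [image_congr this, image_id]

lemma img_disj (S q : Finset ℕ) : Disjoint (q.image (ph S)) S := by
  rw [disjoint_left]
  intro x hx
  obtain ⟨y, _, rfl⟩ := mem_image.1 hx
  exact ph_notin S y

lemma up_lin (s1 : b1 ⊆ Icc 1 (N + 6)) (s2 : b2 ⊆ Icc 1 (N + 6)) (dj : Disjoint b1 b2)
    (k1 : b1.card = 3) (k2 : b2.card = 3) {Q : Finset (Finset ℕ)} (hQ : IsLinearDiagram N 3 Q) :
    IsLinearDiagram (N + 6) 3 (up b1 b2 Q) := by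
  have hS : b1 ∪ b2 ⊆ Icc 1 (N + 6) := union_subset s1 s2
  have hc : (b1 ∪ b2).card = 6 := by rw [card_union_of_disjoint dj, k1, k2]
  have hmem : ∀ b, b ∈ up b1 b2 Q ↔ b = b1 ∨ b = b2 ∨ ∃ q ∈ Q, q.image (ph (b1 ∪ b2)) = b := by
    intro b; simp [up]
  refine ⟨?_, ?_, ?_⟩
  · intro b hb
    rcases (hmem b).1 hb with rfl | rfl | ⟨q, hq, rfl⟩
    · exact k1
    · exact k2
    · rw [card_image_of_injective _ (ph_mono _).injective, hQ.1 q hq]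
  · intro b hb x hx
    rcases (hmem b).1 hb with rfl | rfl | ⟨q, hq, rfl⟩
    · exact s1 hx
    · exact s2 hx
    · obtain ⟨y, hy, rfl⟩ := mem_image.1 hx
      exact (ph_mem hS hc y).2 (hQ.2.1 q hq y hy)
  · intro x hx
    by_cases x1 : x ∈ b1
    · refine ⟨b1, ⟨(hmem _).2 (Or.inl rfl), x1⟩, ?_⟩
      rintro b ⟨hb, hxb⟩
      rcases (hmem b).1 hb with rfl | rfl | ⟨q, hq, rfl⟩
      · rfl
      · exact absurd hxb (disjoint_left.1 dj x1)
      · exact absurd (mem_union_left _ x1) (disjoint_left.1 (img_disj _ _) hxb)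
    by_cases x2 : x ∈ b2
    · refine ⟨b2, ⟨(hmem _).2 (Or.inr (Or.inl rfl)), x2⟩, ?_⟩
      rintro b ⟨hb, hxb⟩
      rcases (hmem b).1 hb with rfl | rfl | ⟨q, hq, rfl⟩
      · exact absurd hxb x1
      · rfl
      · exact absurd (mem_union_right _ x2) (disjoint_left.1 (img_disj _ _) hxb)
    have xS : x ∉ b1 ∪ b2 := by simp [x1, x2]
    have hx' := ph_ps _ xS
    have hy : ps (b1 ∪ b2) x ∈ Icc 1 N := by
      rw [← ph_mem hS hc, hx']; exact hx
    obtain ⟨q, ⟨hq, hyq⟩, hu⟩ := hQ.2.2 _ hy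
    refine ⟨q.image (ph (b1 ∪ b2)), ⟨(hmem _).2 (Or.inr (Or.inr ⟨q, hq, rfl⟩)), ?_⟩, ?_⟩
    · exact mem_image.2 ⟨_, hyq, hx'⟩
    · rintro b ⟨hb, hxb⟩
      rcases (hmem b).1 hb with rfl | rfl | ⟨q', hq', rfl⟩
      · exact absurd hxb x1
      · exact absurd hxb x2
      · obtain ⟨y, hy', rfl⟩ := mem_image.1 hxb
        rw [ps_ph] at hu
        rw [hu q' ⟨hq', hy'⟩]

lemma disj_of {P : Finset (Finset ℕ)} (hP : IsLinearDiagram (N + 6) 3 P) (h1 : b1 ∈ P)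
    (h2 : b2 ∈ P) {q : Finset ℕ} (hq : q ∈ P \ {b1, b2}) : Disjoint q (b1 ∪ b2) := by
  simp only [mem_sdiff, mem_insert, mem_singleton, not_or] at hq
  rw [disjoint_left]
  intro x hx hx'
  rcases mem_union.1 hx' with h | h
  · exact hq.2.1 (exu hP hq.1 h1 hx h)
  · exact hq.2.2 (exu hP hq.1 h2 hx h)

lemma dn_lin (s1 : b1 ⊆ Icc 1 (N + 6)) (s2 : b2 ⊆ Icc 1 (N + 6)) (dj : Disjoint b1 b2)
    (k1 : b1.card = 3) (k2 : b2.card = 3) {P : Finset (Finset ℕ)}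
    (hP : IsLinearDiagram (N + 6) 3 P) (h1 : b1 ∈ P) (h2 : b2 ∈ P) :
    IsLinearDiagram N 3 (dn b1 b2 P) := by
  have hS : b1 ∪ b2 ⊆ Icc 1 (N + 6) := union_subset s1 s2
  have hc : (b1 ∪ b2).card = 6 := by rw [card_union_of_disjoint dj, k1, k2]
  have hmem : ∀ b, b ∈ dn b1 b2 P ↔ ∃ q ∈ P \ {b1, b2}, q.image (ps (b1 ∪ b2)) = b := by
    intro b; simp only [dn, mem_image]
  refine ⟨?_, ?_, ?_⟩
  · intro b hb
    obtain ⟨q, hq, rfl⟩ := (hmem b).1 hb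
    have e := img_ph_ps _ q (disj_of hP h1 h2 hq)
    have e2 := card_image_of_injective (q.image (ps (b1 ∪ b2))) (ph_mono (b1 ∪ b2)).injective
    rw [e] at e2
    rw [← e2]
    exact hP.1 q (mem_sdiff.1 hq).1
  · intro b hb x hx
    obtain ⟨q, hq, rfl⟩ := (hmem b).1 hb
    obtain ⟨y, hy, rfl⟩ := mem_image.1 hx
    rw [← ph_mem hS hc, ph_ps _ (disjoint_left.1 (disj_of hP h1 h2 hq) hy)]
    exact hP.2.1 q (mem_sdiff.1 hq).1 y hy
  · intro x hx
    have hx2 := (ph_mem hS hc x).2 hx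
    obtain ⟨q, ⟨hq, hxq⟩, hu⟩ := hP.2.2 _ hx2
    have hn := ph_notin (b1 ∪ b2) x
    have hq' : q ∈ P \ {b1, b2} := by
      simp only [mem_sdiff, mem_insert, mem_singleton, not_or]
      refine ⟨hq, ?_, ?_⟩
      · rintro rfl; exact hn (mem_union_left _ hxq)
      · rintro rfl; exact hn (mem_union_right _ hxq)
    refine ⟨q.image (ps (b1 ∪ b2)), ⟨(hmem _).2 ⟨q, hq', rfl⟩,
      mem_image.2 ⟨_, hxq, ps_ph _ _⟩⟩, ?_⟩
    rintro b ⟨hb, hxb⟩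
    obtain ⟨r, hr, rfl⟩ := (hmem b).1 hb
    obtain ⟨y, hy, rfl⟩ := mem_image.1 hxb
    rw [ph_ps _ (disjoint_left.1 (disj_of hP h1 h2 hr) hy)] at hu
    rw [hu r ⟨(mem_sdiff.1 hr).1, hy⟩]

lemma up_dn {P : Finset (Finset ℕ)}
    (hP : IsLinearDiagram (N + 6) 3 P) (h1 : b1 ∈ P) (h2 : b2 ∈ P) :
    up b1 b2 (dn b1 b2 P) = P := by
  have : ((P \ {b1, b2}).image (fun q => q.image (ps (b1 ∪ b2)))).image
      (fun q => q.image (ph (b1 ∪ b2))) = P \ {b1, b2} := by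
    rw [image_image]
    have : ∀ q ∈ P \ {b1, b2}, ((fun q : Finset ℕ => q.image (ph (b1 ∪ b2))) ∘
        (fun q => q.image (ps (b1 ∪ b2)))) q = id q := by
      intro q hq
      exact img_ph_ps _ q (disj_of hP h1 h2 hq)
    rw [image_congr this, image_id]
  unfold up dn
  rw [this]
  apply union_sdiff_of_subset
  intro b hb
  simp only [mem_insert, mem_singleton] at hb
  rcases hb with rfl | rfl <;> assumption

lemma dn_up (k1 : b1.card = 3) (k2 : b2.card = 3) (Q : Finset (Finset ℕ)) :
    dn b1 b2 (up b1 b2 Q) = Q := by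
  have ne : ∀ q : Finset ℕ, q.image (ph (b1 ∪ b2)) ≠ b1 ∧ q.image (ph (b1 ∪ b2)) ≠ b2 := by
    intro q
    have hd := img_disj (b1 ∪ b2) q
    constructor
    · intro h; rw [h] at hd
      have := disjoint_self.1 (hd.mono_right subset_union_left)
      simp at this; rw [this] at k1; simp at k1
    · intro h; rw [h] at hd
      have := disjoint_self.1 (hd.mono_right subset_union_right)
      simp at this; rw [this] at k2; simp at k2
  have : up b1 b2 Q \ {b1, b2} = Q.image (fun q => q.image (ph (b1 ∪ b2))) := by
    unfold up
    rw [union_sdiff_left]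
    apply sdiff_eq_self_of_disjoint
    rw [disjoint_left]
    intro b hb hb'
    obtain ⟨q, _, rfl⟩ := mem_image.1 hb
    simp only [mem_insert, mem_singleton] at hb'
    have := ne q
    tauto
  unfold dn
  rw [this, image_image]
  have : ((fun q : Finset ℕ => q.image (ps (b1 ∪ b2))) ∘
      fun q => q.image (ph (b1 ∪ b2))) = id := by
    funext q; exact img_ps_ph _ q
  rw [this, image_id]

lemma loopsIn_eq_zero (b : Finset ℕ) : loopsIn b = 0 ↔ ∀ i, i ∈ b → i + 1 ∉ b := by
  unfold loopsIn
  rw [card_eq_zero, filter_eq_empty_iff]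

lemma up_good (s1 : b1 ⊆ Icc 1 (N + 6)) (s2 : b2 ⊆ Icc 1 (N + 6)) (dj : Disjoint b1 b2)
    (k1 : b1.card = 3) (k2 : b2.card = 3) {Q : Finset (Finset ℕ)} (hQ : IsLinearDiagram N 3 Q) :
    (∀ c ∈ up b1 b2 Q, c ≠ b1 → c ≠ b2 → loopsIn c = 0) ↔
      GoodGap (loopF Q) (N + 7) b1 b2 := by
  have hS : b1 ∪ b2 ⊆ Icc 1 (N + 6) := union_subset s1 s2
  have hc : (b1 ∪ b2).card = 6 := by rw [card_union_of_disjoint dj, k1, k2]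
  constructor
  · intro h i hi a1 a2 a3 a4 hL
    rw [← count_notin] at hL
    change ps (b1 ∪ b2) i ∈ _ at hL
    have iS : i ∉ b1 ∪ b2 := by simp [a1, a2]
    have iS' : i + 1 ∉ b1 ∪ b2 := by simp [a3, a4]
    obtain ⟨q, hq, h3, h4⟩ := mem_loopF.1 hL
    rw [← ps_succ _ iS] at h4
    have m1 : i ∈ q.image (ph (b1 ∪ b2)) := mem_image.2 ⟨_, h3, ph_ps _ iS⟩
    have m2 : i + 1 ∈ q.image (ph (b1 ∪ b2)) := mem_image.2 ⟨_, h4, ph_ps _ iS'⟩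
    have := h (q.image (ph (b1 ∪ b2))) (by
      unfold up; exact mem_union_right _ (mem_image.2 ⟨q, hq, rfl⟩))
      (by rintro e; rw [e] at m1; exact a1 m1) (by rintro e; rw [e] at m1; exact a2 m1)
    exact (loopsIn_eq_zero _).1 this i m1 m2
  · intro h c hcu n1 n2
    simp only [up, mem_union, mem_insert, mem_singleton, mem_image] at hcu
    rcases hcu with (h' | h') | ⟨q, hq, rfl⟩
    · exact absurd h' n1
    · exact absurd h' n2
    rw [loopsIn_eq_zero]
    intro i h1 h2
    have d := img_disj (b1 ∪ b2) q
    have i1 := disjoint_left.1 d h1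
    have i2 := disjoint_left.1 d h2
    obtain ⟨g, hg, hgi⟩ := mem_image.1 h1
    obtain ⟨g', hg', hgi'⟩ := mem_image.1 h2
    have e1 : ps (b1 ∪ b2) i = g := by rw [← hgi, ps_ph]
    have e2 : ps (b1 ∪ b2) (i + 1) = g' := by rw [← hgi', ps_ph]
    rw [ps_succ _ i1, e1] at e2
    have hlt := (ph_mem hS hc g).2 (hQ.2.1 q hq g hg)
    rw [hgi, mem_Icc] at hlt
    rw [mem_union, not_or] at i1 i2
    apply h i (by omega) i1.1 i1.2 i2.1 i2.2
    rw [← count_notin]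
    change ps (b1 ∪ b2) i ∈ _
    rw [e1, mem_loopF]
    exact ⟨q, hq, hg, by rw [e2]; exact hg'⟩

open Classical in
lemma fiber_card (s1 : b1 ⊆ Icc 1 (N + 6)) (s2 : b2 ⊆ Icc 1 (N + 6)) (dj : Disjoint b1 b2)
    (k1 : b1.card = 3) (k2 : b2.card = 3) :
    ((DD (N + 6)).filter (fun P => PairIn P (b1, b2))).card =
    ((DD N).filter (fun Q => GoodGap (loopF Q) (N + 7) b1 b2)).card := by
  apply Finset.card_nbij' (dn b1 b2) (up b1 b2)
  · intro P hP
    simp only [coe_filter, Set.mem_ofPred_eq, mem_DD] at hP ⊢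
    obtain ⟨hP, h1, h2, h3⟩ := hP
    have hl := dn_lin s1 s2 dj k1 k2 hP h1 h2
    refine ⟨hl, ?_⟩
    rw [← up_good s1 s2 dj k1 k2 hl, up_dn hP h1 h2]
    exact h3
  · intro Q hQ
    simp only [coe_filter, Set.mem_ofPred_eq, mem_DD] at hQ ⊢
    refine ⟨up_lin s1 s2 dj k1 k2 hQ.1, by simp [up], by simp [up], ?_⟩
    rw [up_good s1 s2 dj k1 k2 hQ.1]
    exact hQ.2
  · intro P hP
    simp only [coe_filter, Set.mem_ofPred_eq, mem_DD] at hP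
    exact up_dn hP.1 hP.2.1 hP.2.2.1
  · intro Q _
    exact dn_up k1 k2 Q

end fiber

open Classical in
/-- ordered pairs of single-loop triples -/
noncomputable def UU (N : ℕ) : Finset (Finset ℕ × Finset ℕ) :=
  ((Icc 1 (N + 6)).powerset ×ˢ (Icc 1 (N + 6)).powerset).filter
    (fun b => Disjoint b.1 b.2 ∧ b.1.card = 3 ∧ b.2.card = 3 ∧ loopsIn b.1 = 1 ∧ loopsIn b.2 = 1)

lemma mem_UU {N : ℕ} {b : Finset ℕ × Finset ℕ} : b ∈ UU N ↔
    (b.1 ⊆ Icc 1 (N + 6) ∧ b.2 ⊆ Icc 1 (N + 6)) ∧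
    Disjoint b.1 b.2 ∧ b.1.card = 3 ∧ b.2.card = 3 ∧ loopsIn b.1 = 1 ∧ loopsIn b.2 = 1 := by
  unfold UU
  rw [mem_filter, mem_product, mem_powerset, mem_powerset]

open Classical in
lemma UU_good (N : ℕ) (L : Finset ℕ) :
    (UU N).filter (fun b => GoodGap L (N + 7) b.1 b.2) = A0 L (N + 7) 3 3 1 1 := by
  ext b
  simp only [A0, mem_filter, mem_AA, mem_UU]
  constructor
  · rintro ⟨⟨⟨s1, s2⟩, dj, k1, k2, m1, m2⟩, g⟩
    have hI : Icc 1 (N + 6) ⊆ Icc 1 (N + 7) := Icc_subset_Icc le_rfl (by omega)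
    refine ⟨⟨s1.trans hI, s2.trans hI, dj, k1, k2, m1, m2, g⟩, ?_, ?_⟩
    · intro h; have := mem_Icc.1 (s1 h); omega
    · intro h; have := mem_Icc.1 (s2 h); omega
  · rintro ⟨h, h1, h2⟩
    have h' := (ok_same h1 h2).1 h
    exact ⟨⟨⟨h'.1.s1, h'.1.s2⟩, h.dj, h.k1, h.k2, h.m1, h.m2⟩, h.gd⟩

open Classical in
lemma double_count (N : ℕ) :
    ∑ P ∈ DD (N + 6), ((UU N).filter (fun b => PairIn P b)).card =
      ∑ Q ∈ DD N, (A0 (loopF Q) (N + 7) 3 3 1 1).card := by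
  simp_rw [← UU_good]
  have h1 := Finset.sum_card_bipartiteAbove_eq_sum_card_bipartiteBelow
    (s := DD (N + 6)) (t := UU N) (fun P b => PairIn P b)
  have h2 := Finset.sum_card_bipartiteAbove_eq_sum_card_bipartiteBelow
    (s := DD N) (t := UU N) (fun Q b => GoodGap (loopF Q) (N + 7) b.1 b.2)
  unfold bipartiteAbove bipartiteBelow at h1 h2
  rw [h1, h2]
  apply sum_congr rfl
  intro b hb
  rw [mem_UU] at hb
  exact fiber_card hb.1.1 hb.1.2 hb.2.1 hb.2.2.1 hb.2.2.2.1

def XP (M : ℕ) (P : Finset (Finset ℕ)) : Prop := linLoops M P = 2 ∧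
          ¬∃ b ∈ P, ∀ i : ℕ, 1 ≤ i → i + 1 ≤ M →
            (∃ c ∈ P, i ∈ c ∧ i + 1 ∈ c) → i ∈ b ∧ i + 1 ∈ b

open Classical in
lemma pairs_card (N : ℕ) {P : Finset (Finset ℕ)} (hP : IsLinearDiagram (N + 6) 3 P) :
    ((UU N).filter (fun b => PairIn P b)).card = if XP (N + 6) P then 2 else 0 := by
  have hmem : ∀ b : Finset ℕ × Finset ℕ, b ∈ (UU N).filter (fun b => PairIn P b) ↔
      b.1 ∈ P ∧ b.2 ∈ P ∧ b.1 ≠ b.2 ∧ loopsIn b.1 = 1 ∧ loopsIn b.2 = 1 ∧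
        ∀ c ∈ P, c ≠ b.1 → c ≠ b.2 → loopsIn c = 0 := by
    intro b
    rw [mem_filter, mem_UU]
    unfold PairIn
    constructor
    · rintro ⟨⟨_, dj, k1, _, m1, m2⟩, h1, h2, h3⟩
      refine ⟨h1, h2, ?_, m1, m2, h3⟩
      intro e
      rw [← e] at dj
      have := disjoint_self.1 dj
      simp at this; rw [this] at k1; simp at k1
    · rintro ⟨h1, h2, ne, m1, m2, h3⟩
      refine ⟨⟨⟨fun x hx => hP.2.1 _ h1 x hx, fun x hx => hP.2.1 _ h2 x hx⟩, ?_, hP.1 _ h1,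
        hP.1 _ h2, m1, m2⟩, h1, h2, h3⟩
      rw [disjoint_left]
      intro x hx hy
      exact ne (exu hP h1 h2 hx hy)
  have hlp : ∀ c ∈ P, ∀ i, i ∈ c → i + 1 ∈ c → 1 ≤ i ∧ i + 1 ≤ N + 6 := by
    intro c hc i h1 h2
    exact ⟨(mem_Icc.1 (hP.2.1 c hc _ h1)).1, (mem_Icc.1 (hP.2.1 c hc _ h2)).2⟩
  split_ifs with hX
  · obtain ⟨h2, hno⟩ := hX
    have hsum := linLoops_sum hP
    rw [h2] at hsum
    -- first block
    obtain ⟨b1, hb1, hl1⟩ : ∃ b ∈ P, loopsIn b ≠ 0 := by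
      by_contra hcon
      push Not at hcon
      rw [sum_eq_zero hcon] at hsum
      omega
    obtain ⟨b2, hb2, hl2, hne⟩ : ∃ b ∈ P, loopsIn b ≠ 0 ∧ b1 ≠ b := by
      by_contra hcon
      push Not at hcon
      apply hno
      refine ⟨b1, hb1, ?_⟩
      rintro i _ _ ⟨c, hc, i1, i2⟩
      have : loopsIn c ≠ 0 := fun h0 => (loopsIn_eq_zero c).1 h0 i i1 i2
      rw [hcon c hc this]
      exact ⟨i1, i2⟩
    rw [← add_sum_erase P _ hb1, ← add_sum_erase (P.erase b1) _ (mem_erase.2 ⟨hne.symm, hb2⟩)]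
      at hsum
    have z : ∑ x ∈ (P.erase b1).erase b2, loopsIn x = 0 := by omega
    have z1 : loopsIn b1 = 1 := by omega
    have z2 : loopsIn b2 = 1 := by omega
    rw [sum_eq_zero_iff] at z
    have z' : ∀ c ∈ P, c ≠ b1 → c ≠ b2 → loopsIn c = 0 := fun c hc n1 n2 =>
      z c (mem_erase.2 ⟨n2, mem_erase.2 ⟨n1, hc⟩⟩)
    rw [card_eq_two]
    refine ⟨(b1, b2), (b2, b1), by simp [hne], ?_⟩
    ext b
    rw [hmem]
    simp only [mem_insert, mem_singleton]
    constructor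
    · rintro ⟨p1, p2, n, m1, m2, _⟩
      have o1 : b.1 = b1 ∨ b.1 = b2 := by
        by_contra hcon; push Not at hcon
        have := z' _ p1 hcon.1 hcon.2; omega
      have o2 : b.2 = b1 ∨ b.2 = b2 := by
        by_contra hcon; push Not at hcon
        have := z' _ p2 hcon.1 hcon.2; omega
      rcases o1 with o1 | o1 <;> rcases o2 with o2 | o2
      · exact absurd (o1.trans o2.symm) n
      · exact Or.inl (Prod.ext o1 o2)
      · exact Or.inr (Prod.ext o1 o2)
      · exact absurd (o1.trans o2.symm) n
    · rintro (rfl | rfl)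
      · exact ⟨hb1, hb2, hne, z1, z2, z'⟩
      · exact ⟨hb2, hb1, hne.symm, z2, z1, fun c hc n1 n2 => z' c hc n2 n1⟩
  · rw [card_eq_zero, eq_empty_iff_forall_notMem]
    intro b hb
    apply hX
    obtain ⟨p1, p2, n, m1, m2, h3⟩ := (hmem b).1 hb
    constructor
    · have hz : ∑ x ∈ (P.erase b.1).erase b.2, loopsIn x = 0 := by
        apply sum_eq_zero
        intro c hc
        have := mem_erase.1 hc
        have h' := mem_erase.1 this.2
        exact h3 c h'.2 h'.1 this.1
      rw [linLoops_sum hP, ← add_sum_erase P _ p1,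
        ← add_sum_erase (P.erase b.1) _ (mem_erase.2 ⟨n.symm, p2⟩), m1, m2, hz, add_zero]
    · rintro ⟨c, hc, hall⟩
      have f : ∀ a ∈ P, loopsIn a = 1 → a = c := by
        intro a ha hl
        have : ¬ ∀ i, i ∈ a → i + 1 ∉ a := by
          rw [← loopsIn_eq_zero]; omega
        push Not at this
        obtain ⟨i, i1, i2⟩ := this
        have hh := hlp a ha i i1 i2
        have := hall i hh.1 hh.2 ⟨a, ha, i1, i2⟩
        exact exu hP ha hc i1 this.1
      exact n ((f _ p1 m1).trans (f _ p2 m2).symm)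

open Classical in
lemma T_val (N : ℕ) {Q : Finset (Finset ℕ)} (hQ : IsLinearDiagram N 3 Q) :
    (A0 (loopF Q) (N + 7) 3 3 1 1).card =
      if linLoops N Q < 5 then 4 * RHS N (linLoops N Q) else 0 := by
  have hm : mm (loopF Q) (N + 1) = linLoops N Q := by
    rw [linLoops_eq hQ]
    unfold mm
    rw [filter_true_of_mem]
    intro x hx
    obtain ⟨b, hb, h1, h2⟩ := mem_loopF.1 hx
    have := mem_Icc.1 (hQ.2.1 b hb _ h2)
    omega
  have hle := mm_le (loopF Q) (N + 1)
  rw [hm] at hle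
  rw [(A_closed (loopF Q) (N + 7) (N + 1) 3 3 1 1 (by omega)).1,
    SS_val (loopF Q) (N + 1) _ (N + 1 - linLoops N Q) hm (by omega)]
  exact arith N _ _ (by omega)

open Classical in
lemma main_count (N : ℕ) :
    2 * ((DD (N + 6)).filter (fun P => XP (N + 6) P)).card =
      4 * ∑ m ∈ range 5, RHS N m * ((DD N).filter (fun Q => linLoops N Q = m)).card := by
  have h := double_count N
  rw [sum_congr rfl (fun P hP => pairs_card N (mem_DD.1 hP)),
    sum_congr rfl (fun Q hQ => T_val N (mem_DD.1 hQ))] at h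
  rw [card_filter, mul_sum]
  simp only [mul_ite, mul_one, mul_zero]
  rw [h, mul_sum]
  simp_rw [card_filter, mul_sum]
  rw [sum_comm]
  apply sum_congr rfl
  intro Q _
  simp only [mul_ite, mul_one, mul_zero]
  rw [sum_ite_eq]
  simp only [mem_range]

end helpers

/-- for `d = 3` and `n ≥ 2`, the number of generalized linear diagrams of
order `(n,3)` with exactly `2` loops lying in two distinct blocks. -/
theorem linear_two_blocks_loops (n : ℕ) (hn : 2 ≤ n) :
    Set.ncard {P : Finset (Finset ℕ) |
        IsLinearDiagram (n * 3) 3 P ∧ linLoops (n * 3) P = 2 ∧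
          ¬∃ b ∈ P, ∀ i : ℕ, 1 ≤ i → i + 1 ≤ n * 3 →
            (∃ c ∈ P, i ∈ c ∧ i + 1 ∈ c) → i ∈ b ∧ i + 1 ∈ b} =
      2 * ∑ m ∈ Finset.range 5, ∑ j ∈ Finset.range 2,
            ∑ s ∈ Finset.range (min m (2 - j) + 1),
              m.choose s *
                iChoose (3 * ((n : ℤ) - 2) + 1 - (m : ℤ)) (2 - (j : ℤ) - (s : ℤ)) *
                iChoose (3 * ((n : ℤ) - 2) + 3 - (m : ℤ) - (j : ℤ) + (s : ℤ))
                  (2 - (m : ℤ) - (j : ℤ) + (s : ℤ)) *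
                numA 3 (n - 2) m := by
  classical
  obtain ⟨k, rfl⟩ : ∃ k, n = k + 2 := ⟨n - 2, by omega⟩
  have e : (k + 2) * 3 = k * 3 + 6 := by ring
  rw [e]
  have hL : {P : Finset (Finset ℕ) |
        IsLinearDiagram (k * 3 + 6) 3 P ∧ linLoops (k * 3 + 6) P = 2 ∧
          ¬∃ b ∈ P, ∀ i : ℕ, 1 ≤ i → i + 1 ≤ k * 3 + 6 →
            (∃ c ∈ P, i ∈ c ∧ i + 1 ∈ c) → i ∈ b ∧ i + 1 ∈ b} =
      (((DD (k * 3 + 6)).filter (fun P => XP (k * 3 + 6) P) : Finset _) : Set _) := by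
    ext P
    rw [Finset.mem_coe, Finset.mem_filter, mem_DD]
    rfl
  rw [hL, Set.ncard_coe_finset]
  have hA : ∀ m, numA 3 (k + 2 - 2) m =
      ((DD (k * 3)).filter (fun Q => linLoops (k * 3) Q = m)).card := by
    intro m
    unfold numA
    rw [Nat.add_sub_cancel, ← Set.ncard_coe_finset]
    congr 1
    ext P
    simp only [Finset.coe_filter, Set.mem_ofPred_eq, mem_DD]
  have h := main_count (k * 3)
  have hR : ∑ m ∈ Finset.range 5, ∑ j ∈ Finset.range 2,
            ∑ s ∈ Finset.range (min m (2 - j) + 1),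
              m.choose s *
                iChoose (3 * (((k + 2 : ℕ) : ℤ) - 2) + 1 - (m : ℤ)) (2 - (j : ℤ) - (s : ℤ)) *
                iChoose (3 * (((k + 2 : ℕ) : ℤ) - 2) + 3 - (m : ℤ) - (j : ℤ) + (s : ℤ))
                  (2 - (m : ℤ) - (j : ℤ) + (s : ℤ)) *
                numA 3 (k + 2 - 2) m =
      ∑ m ∈ Finset.range 5, RHS (k * 3) m *
        ((DD (k * 3)).filter (fun Q => linLoops (k * 3) Q = m)).card := by
    have e3 : 3 * (((k + 2 : ℕ) : ℤ) - 2) = ((k * 3 : ℕ) : ℤ) := by push_cast; ring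
    rw [e3]
    apply Finset.sum_congr rfl
    intro m _
    rw [hA, RHS, Finset.sum_mul]
    apply Finset.sum_congr rfl
    intro j _
    rw [Finset.sum_mul]
  rw [hR]
  omega
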